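/- Let n ≥ 4 and let L be a Cartan type Lie superalgebra over ℂ, i.e. one of W(n), S(n), S̃(n) (n even), or H(n) (n > 4), with its ℤ-grading. Then L is generated as a Lie superalgebra by L_{−1} ⊕ L_0 ⊕ L_1: the smallest subalgebra of L containing L_{−1} ⊕ L_0 ⊕ L_1 equals L. -/

import Mathlib

open scoped BigOperators

noncomputable section

namespace CartanSuper

/-- Coordinates of the exterior algebra `Λ(n)` with respect to the monomial basis
`{x_S : S ⊆ {1,…,n}}`. -/
abbrev Lambda (n : ℕ) := Finset (Fin n) → ℂ

/-- Endomorphism algebra of `Λ(n)`. -/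
abbrev E (n : ℕ) := Module.End ℂ (Lambda n)

variable (n : ℕ)

/-- `(−1)^k`. -/
def msign (k : ℕ) : ℂ := (-1 : ℂ) ^ k

/-- The basis monomial `x_S = x_{i₁}⋯x_{i_k}` (indices in increasing order). -/
def mono (S : Finset (Fin n)) : Lambda n := fun T => if T = S then 1 else 0

/-- Number of inversions between `S` and `T`. -/
def inversions (S T : Finset (Fin n)) : ℕ := ((S ×ˢ T).filter fun p => p.2 < p.1).card

/-- The multiplication of `Λ(n)` in coordinates:
`x_S · x_T = (−1)^{inversions} x_{S ∪ T}` for disjoint `S, T` and `0` otherwise. -/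
def lmulFun (f g : Lambda n) : Lambda n :=
  fun U => ∑ S ∈ U.powerset, msign (inversions n S (U \ S)) * f S * g (U \ S)

/-- Left multiplication by an element of `Λ(n)`, as a linear map `Λ(n) →ₗ End Λ(n)`. -/
def mulOp : Lambda n →ₗ[ℂ] E n where
  toFun f :=
    { toFun := lmulFun n f
      map_add' := by
        intro g h; funext U
        simp [lmulFun, mul_add, Finset.sum_add_distrib]
      map_smul' := by
        intro c g; funext U
        simp only [lmulFun, Pi.smul_apply, smul_eq_mul, RingHom.id_apply, Finset.mul_sum]
        exact Finset.sum_congr rfl (by intros; ring) }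
  map_add' := by
    intro f g; apply LinearMap.ext; intro h; funext U
    show lmulFun n (f + g) h U = lmulFun n f h U + lmulFun n g h U
    simp only [lmulFun]
    rw [← Finset.sum_add_distrib]
    exact Finset.sum_congr rfl (by intros; simp [Pi.add_apply]; ring)
  map_smul' := by
    intro c f; apply LinearMap.ext; intro h; funext U
    show lmulFun n (c • f) h U = (c • lmulFun n f h) U
    simp only [lmulFun, Pi.smul_apply, smul_eq_mul, Finset.mul_sum]
    exact Finset.sum_congr rfl (by intros; ring)

/-- The superderivation `∂_i` of `Λ(n)`, in coordinates. -/
def pd (i : Fin n) : E n where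
  toFun f := fun S =>
    if i ∈ S then 0 else msign (S.filter (· < i)).card * f (insert i S)
  map_add' := by
    intro f g; funext S; by_cases h : i ∈ S <;> simp [h, mul_add]
  map_smul' := by
    intro c f; funext S; by_cases h : i ∈ S <;> simp [h] <;> ring

/-- The parity operator `σ` of `Λ(n)`: `σ(x_S) = (−1)^{|S|} x_S`. -/
def par : E n where
  toFun f := fun S => msign S.card * f S
  map_add' := by intro f g; funext S; simp [mul_add]
  map_smul' := by intro c f; funext S; simp; ring

/-- The super-commutator `[D,F] = D∘F − (−1)^{|D||F|} F∘D`, extended bilinearly to all of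
`End Λ(n)` using the parity operator `σ`
(for homogeneous `D`, `σ∘D∘σ = (−1)^{|D|} D`). -/
def sbFun (D F : E n) : E n :=
  D * F - (2:ℂ)⁻¹ • ((F + par n * F * par n) * D + (F - par n * F * par n) * (par n * D * par n))

/-- The super-commutator as a bilinear map. -/
def sbL : E n →ₗ[ℂ] E n →ₗ[ℂ] E n :=
  LinearMap.mk₂ ℂ (sbFun n)
    (fun D D' F => by
      simp only [sbFun, add_mul, sub_mul, mul_add, mul_sub, smul_mul_assoc, mul_smul_comm,
        smul_add, smul_sub]
      module)
    (fun c D F => by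
      simp only [sbFun, add_mul, sub_mul, mul_add, mul_sub, smul_mul_assoc, mul_smul_comm,
        smul_add, smul_sub]
      module)
    (fun D F F' => by
      simp only [sbFun, add_mul, sub_mul, mul_add, mul_sub, smul_mul_assoc, mul_smul_comm,
        smul_add, smul_sub]
      module)
    (fun c D F => by
      simp only [sbFun, add_mul, sub_mul, mul_add, mul_sub, smul_mul_assoc, mul_smul_comm,
        smul_add, smul_sub]
      module)

/-- Shorthand for the super-commutator. -/
def sb (D F : E n) : E n := sbL n D F

/-- The ℤ₂-homogeneous component of `Λ(n)` of parity `p`. -/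
def lpar (p : ZMod 2) : Submodule ℂ (Lambda n) where
  carrier := {f | ∀ S : Finset (Fin n), (S.card : ZMod 2) ≠ p → f S = 0}
  add_mem' := by intro f g hf hg S hS; simp [Pi.add_apply, hf S hS, hg S hS]
  zero_mem' := by intro S hS; rfl
  smul_mem' := by intro c f hf S hS; simp [Pi.smul_apply, hf S hS]

/-- The ℤ-homogeneous component of `Λ(n)` of degree `m` (zero unless `0 ≤ m ≤ n`). -/
def ldeg (m : ℤ) : Submodule ℂ (Lambda n) where
  carrier := {f | ∀ S : Finset (Fin n), (S.card : ℤ) ≠ m → f S = 0}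
  add_mem' := by intro f g hf hg S hS; simp [Pi.add_apply, hf S hS, hg S hS]
  zero_mem' := by intro S hS; rfl
  smul_mem' := by intro c f hf S hS; simp [Pi.smul_apply, hf S hS]

/-- Endomorphisms of `Λ(n)` that are ℤ₂-homogeneous of parity `p`. -/
def epar (p : ZMod 2) : Submodule ℂ (E n) where
  carrier := {D | ∀ (q : ZMod 2), ∀ f ∈ lpar n q, D f ∈ lpar n (q + p)}
  add_mem' := by
    intro D F hD hF q f hf
    simpa [LinearMap.add_apply] using (lpar n (q + p)).add_mem (hD q f hf) (hF q f hf)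
  zero_mem' := by intro q f hf; simpa using (lpar n (q + p)).zero_mem
  smul_mem' := by
    intro c D hD q f hf
    simpa [LinearMap.smul_apply] using (lpar n (q + p)).smul_mem c (hD q f hf)

/-- Endomorphisms of `Λ(n)` that are ℤ-homogeneous of degree `d`. -/
def edeg (d : ℤ) : Submodule ℂ (E n) where
  carrier := {D | ∀ (m : ℤ), ∀ f ∈ ldeg n m, D f ∈ ldeg n (m + d)}
  add_mem' := by
    intro D F hD hF m f hf
    simpa [LinearMap.add_apply] using (ldeg n (m + d)).add_mem (hD m f hf) (hF m f hf)
  zero_mem' := by intro m f hf; simpa using (ldeg n (m + d)).zero_mem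
  smul_mem' := by
    intro c D hD m f hf
    simpa [LinearMap.smul_apply] using (ldeg n (m + d)).smul_mem c (hD m f hf)

/-- The linear map `(f₁,…,f_n) ↦ ∑ᵢ fᵢ ∂ᵢ`. -/
def Wmap : (Fin n → Lambda n) →ₗ[ℂ] E n where
  toFun F := ∑ i, mulOp n (F i) * pd n i
  map_add' := by
    intro F G
    simp only [Pi.add_apply, map_add, add_mul, Finset.sum_add_distrib]
  map_smul' := by
    intro c F
    simp only [RingHom.id_apply, Pi.smul_apply, map_smul, smul_mul_assoc, Finset.smul_sum]

/-- The divergence `(f₁,…,f_n) ↦ ∑ᵢ ∂ᵢ(fᵢ)`. -/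
def divMap : (Fin n → Lambda n) →ₗ[ℂ] Lambda n where
  toFun F := ∑ i, pd n i (F i)
  map_add' := by
    intro F G
    simp only [Pi.add_apply, map_add, Finset.sum_add_distrib]
  map_smul' := by
    intro c F
    simp only [RingHom.id_apply, Pi.smul_apply, map_smul, Finset.smul_sum]

/-- The Witt type Lie superalgebra `W(n) = {∑ fᵢ∂ᵢ : fᵢ ∈ Λ(n)}`. -/
def Wn : Submodule ℂ (E n) := LinearMap.range (Wmap n)

/-- Divergence-free coefficient tuples. -/
def divFree : Submodule ℂ (Fin n → Lambda n) := LinearMap.ker (divMap n)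

/-- The special type Lie superalgebra `S(n) = {∑ fᵢ∂ᵢ : ∑ ∂ᵢ(fᵢ) = 0}`. -/
def Sn : Submodule ℂ (E n) := (divFree n).map (Wmap n)

/-- The top monomial `ω = x₁x₂⋯x_n`. -/
def omegaTop : Lambda n := mono n Finset.univ

/-- `1 − x₁x₂⋯x_n`. -/
def oneM : Lambda n := mono n ∅ - omegaTop n

/-- Multiplication of every coefficient by `1 − x₁⋯x_n`. -/
def oneMScale : (Fin n → Lambda n) →ₗ[ℂ] (Fin n → Lambda n) :=
  LinearMap.pi fun i => (mulOp n (oneM n)) ∘ₗ LinearMap.proj i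

/-- The Lie superalgebra `S̃(n) = {(1−x₁⋯x_n)∑ fᵢ∂ᵢ : ∑ ∂ᵢ(fᵢ) = 0}` (`n` even). -/
def Stn : Submodule ℂ (E n) := (divFree n).map (Wmap n ∘ₗ oneMScale n)

/-- The conjugate index `i'`. -/
def cidx (i : Fin n) : Fin n :=
  ⟨if i.val < n / 2 then i.val + n / 2 else if i.val < 2 * (n / 2) then i.val - n / 2 else i.val,
   by have := i.isLt; split_ifs <;> omega⟩

/-- The linear map `f ↦ D_H(f) = (−1)^{|f|} ∑ᵢ ∂ᵢ(f)∂_{i'}` (the sign is implemented by the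
parity operator `σ`, so that this is a single linear map agreeing with `D_H` on homogeneous
elements). -/
def DHmap : Lambda n →ₗ[ℂ] E n where
  toFun f := ∑ i, mulOp n (pd n i (par n f)) * pd n (cidx n i)
  map_add' := by
    intro f g
    simp only [map_add, add_mul, Finset.sum_add_distrib]
  map_smul' := by
    intro c f
    simp only [RingHom.id_apply, map_smul, smul_mul_assoc, Finset.smul_sum]

/-- Evaluation of the top coefficient. -/
def evalTop : Lambda n →ₗ[ℂ] ℂ := LinearMap.proj Finset.univ

/-- The Hamiltonian Lie superalgebra `H(n) = {D_H(f) : f ∈ ⊕_{i=0}^{n−1} Λ(n)_i}`. -/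
def Hn : Submodule ℂ (E n) := (LinearMap.ker (evalTop n)).map (DHmap n)

/-- `H̃(n) = {D_H(f) : f ∈ Λ(n)}`. -/
def HtN : Submodule ℂ (E n) := LinearMap.range (DHmap n)

/-- The degree derivation `𝒞 = ∑ᵢ xᵢ∂ᵢ`. -/
def CC : E n := ∑ i, mulOp n (mono n {i}) * pd n i

/-- The span of the diagonal elements `xᵢ∂ᵢ`. -/
def diagSpan : Submodule ℂ (E n) :=
  Submodule.span ℂ (Set.range fun i : Fin n => mulOp n (mono n {i}) * pd n i)

/-- The four families of Cartan type Lie superalgebras. -/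
inductive CT | W | S | St | H
deriving DecidableEq

/-- Validity of the parameter `n` for each family. -/
def CT.valid : CT → ℕ → Prop
  | .W, n => 4 ≤ n
  | .S, n => 4 ≤ n
  | .St, n => 4 ≤ n ∧ Even n
  | .H, n => 4 < n

/-- The Cartan type Lie superalgebra `L` itself. -/
def CT.algebra : CT → (n : ℕ) → Submodule ℂ (E n)
  | .W, n => Wn n
  | .S, n => Sn n
  | .St, n => Stn n
  | .H, n => Hn n

/-- The extended algebra `L'`: `L' = L` for `W(n)` and `S̃(n)`, `L' = S(n) ⊕ ℂ𝒞` for `S(n)`,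
and `L' = H̃(n) ⊕ ℂ𝒞` for `H(n)`. -/
def CT.prime : CT → (n : ℕ) → Submodule ℂ (E n)
  | .W, n => Wn n
  | .S, n => Sn n ⊔ Submodule.span ℂ {CC n}
  | .St, n => Stn n
  | .H, n => HtN n ⊔ Submodule.span ℂ {CC n}

/-- The top degree `ξ_L` of the ℤ-grading. -/
def CT.xi : CT → (n : ℕ) → ℤ
  | .W, n => (n : ℤ) - 1
  | .S, n => (n : ℤ) - 2
  | .St, n => (n : ℤ) - 2
  | .H, n => (n : ℤ) - 3

/-- The ℤ-grading component `L_j = L ∩ W(n)_j`; for `S̃(n)` the component of degree `−1`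
is `span{(1−x₁⋯x_n)∂ᵢ}` instead. -/
def CT.grade (t : CT) (n : ℕ) (j : ℤ) : Submodule ℂ (E n) :=
  match t with
  | .St =>
      if j = -1 then
        Submodule.span ℂ (Set.range fun i : Fin n => mulOp n (oneM n) * pd n i)
      else Stn n ⊓ edeg n j
  | t => t.algebra n ⊓ edeg n j

/-- The ℤ-grading component `L'_j` of the extended algebra `L'`. -/
def CT.grade' (t : CT) (n : ℕ) (j : ℤ) : Submodule ℂ (E n) :=
  match t with
  | .St => CT.grade .St n j
  | t => t.prime n ⊓ edeg n j

/-- The standard Cartan subalgebra `H_L` of `L`: the part of the diagonal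
`span{xᵢ∂ᵢ}` lying in `L`. -/
def CT.cartan (t : CT) (n : ℕ) : Submodule ℂ (E n) := t.algebra n ⊓ diagSpan n

/-- The weight space of `M ⊆ End Λ(n)` of weight `μ ∈ H_L^*` under the adjoint action
of the standard Cartan subalgebra of `L`. -/
def wtsp (t : CT) (n : ℕ) (M : Submodule ℂ (E n)) (μ : Module.Dual ℂ (t.cartan n)) :
    Submodule ℂ (E n) where
  carrier := {x | x ∈ M ∧ ∀ h : t.cartan n, sbL n h x = μ h • x}
  add_mem' := by
    rintro x y ⟨hx, hx'⟩ ⟨hy, hy'⟩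
    exact ⟨M.add_mem hx hy, fun h => by simp [map_add, hx' h, hy' h, smul_add]⟩
  zero_mem' := ⟨M.zero_mem, fun h => by simp⟩
  smul_mem' := by
    rintro c x ⟨hx, hx'⟩
    exact ⟨M.smul_mem c hx, fun h => by simp [map_smul, hx' h, smul_comm c]⟩

/-- The set of roots of `M` with respect to the standard Cartan subalgebra of `L`:
the nonzero weights with nonzero weight space. -/
def CT.roots (t : CT) (n : ℕ) (M : Submodule ℂ (E n)) : Set (Module.Dual ℂ (t.cartan n)) :=
  {ε | ε ≠ 0 ∧ wtsp t n M ε ≠ ⊥}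

/-- The sign `(−1)^p` for `p ∈ ℤ₂`. -/
def sgn (p : ZMod 2) : ℂ := (-1 : ℂ) ^ p.val

/-- `f` is a super-biderivation of `L` of ℤ₂-degree `pf`:
a bilinear map with `f(L_α, L_β) ⊆ L_{α+β+pf}` satisfying
`f([x,y],z) = (−1)^{|x||f|}[x,f(y,z)] + (−1)^{|y||z|}[f(x,z),y]` and
`f(x,[y,z]) = [f(x,y),z] + (−1)^{(|f|+|x|)|y|}[y,f(x,z)]` for homogeneous `x,y,z ∈ L`.
(The bilinear map is given as a bilinear map on the ambient space `End Λ(n)`;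
only its restriction to `L` is relevant.) -/
structure IsSuperBider (L : Submodule ℂ (E n)) (pf : ZMod 2)
    (f : E n →ₗ[ℂ] E n →ₗ[ℂ] E n) : Prop where
  maps : ∀ (α β : ZMod 2), ∀ x ∈ L ⊓ epar n α, ∀ y ∈ L ⊓ epar n β,
    f x y ∈ L ⊓ epar n (α + β + pf)
  eq1 : ∀ (α β γ : ZMod 2), ∀ x ∈ L ⊓ epar n α, ∀ y ∈ L ⊓ epar n β, ∀ z ∈ L ⊓ epar n γ,
    f (sbL n x y) z = sgn (α * pf) • sbL n x (f y z) + sgn (β * γ) • sbL n (f x z) y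
  eq2 : ∀ (α β γ : ZMod 2), ∀ x ∈ L ⊓ epar n α, ∀ y ∈ L ⊓ epar n β, ∀ z ∈ L ⊓ epar n γ,
    f x (sbL n y z) = sbL n (f x y) z + sgn ((pf + α) * β) • sbL n y (f x z)

/-- `D` is a superderivation of `L` of ℤ₂-degree `p`:
`D(L_α) ⊆ L_{α+p}` and `D([x,y]) = [D(x),y] + (−1)^{|D||x|}[x,D(y)]` for homogeneous
`x, y ∈ L`. (Given as a linear map on the ambient space `End Λ(n)`.) -/
structure IsSuperDer (L : Submodule ℂ (E n)) (p : ZMod 2)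
    (D : E n →ₗ[ℂ] E n) : Prop where
  maps : ∀ (α : ZMod 2), ∀ x ∈ L ⊓ epar n α, D x ∈ L ⊓ epar n (α + p)
  leib : ∀ (α β : ZMod 2), ∀ x ∈ L ⊓ epar n α, ∀ y ∈ L ⊓ epar n β,
    D (sbL n x y) = sbL n (D x) y + sgn (p * α) • sbL n x (D y)

/-- `f ∈ BDer(L)_ε`: the super-biderivation `f` has weight `ε ∈ H_L^*`, i.e.
`f(L_η, L_ζ) ⊆ L_{ε+η+ζ}` for all weights `η, ζ`. -/
def CT.HasWeight (t : CT) (n : ℕ) (f : E n →ₗ[ℂ] E n →ₗ[ℂ] E n)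
    (ε : Module.Dual ℂ (t.cartan n)) : Prop :=
  ∀ (η ζ : Module.Dual ℂ (t.cartan n)),
    ∀ x ∈ wtsp t n (t.algebra n) η, ∀ y ∈ wtsp t n (t.algebra n) ζ,
      f x y ∈ wtsp t n (t.algebra n) (ε + η + ζ)

/-- `f ∈ BDer(L)_i`: the super-biderivation `f` has ℤ-degree `i`, i.e.
`f(L_j, L_k) ⊆ L_{i+j+k}` for all `j, k ∈ ℤ`. -/
def CT.HasDeg (t : CT) (n : ℕ) (f : E n →ₗ[ℂ] E n →ₗ[ℂ] E n) (i : ℤ) : Prop :=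
  ∀ (j k : ℤ), ∀ x ∈ t.grade n j, ∀ y ∈ t.grade n k, f x y ∈ t.grade n (i + j + k)

/-!
Bracketing `x_S ∂_k` with the degree-one element `x_i x_j ∂_j`, where `j ∈ S` and `k ≠ i, j`,
multiplies its coefficient by `x_i`, so induction on `|S|` reaches all of `W(n)`. In the
divergence-free case `x_i x_j ∂_j - x_i x_k ∂_k` plays the same role and produces every `x_S ∂_k`
with `k ∉ S`. Together with the elements `x_i x_T ∂_i - x_j x_T ∂_j`, which are brackets of those,
they span `S(n)`. The factor `1 - x₁⋯x_n` of `S̃(n)` acts as the identity on monomials of positive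
degree, so it changes only the degree `-1` generators.

For `H(n)`, `[D_H f, D_H g] = D_H (D_H f (g))`. If `|S| ≥ 4` and `x_S` is not the top monomial,
pick `a ∉ S` and a suitable two-element `P ⊆ S`. Then `x_S` is, up to a nonzero scalar,
`D_H(x_{P ∪ {a}})` applied to `x_{(S \ P) ∪ {a'}}`, where both monomials have degree less than
`|S|`.
-/

variable {n}

lemma msign_add (k l : ℕ) : msign (k + l) = msign k * msign l := pow_add _ _ _

lemma msign_succ (k : ℕ) : msign (k + 1) = -msign k := by simp [msign, pow_succ]

lemma msign_mul_self (k : ℕ) : msign k * msign k = 1 := by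
  rw [← msign_add, msign, (Even.add_self k).neg_one_pow]

lemma msign_ne_zero (k : ℕ) : msign k ≠ 0 := by simp [msign]

/-- The sign `(−1)^{#{j ∈ S : j < i}}` of moving `x_i` into, or `∂_i` up to, its place in the
ordered monomial `x_S`. -/
def moveSign (i : Fin n) (S : Finset (Fin n)) : ℂ := msign (S.filter (· < i)).card

lemma moveSign_mul_self (i : Fin n) (S : Finset (Fin n)) : moveSign i S * moveSign i S = 1 :=
  msign_mul_self _

lemma moveSign_ne_zero (i : Fin n) (S : Finset (Fin n)) : moveSign i S ≠ 0 := msign_ne_zero _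

lemma moveSign_insert {j : Fin n} {S : Finset (Fin n)} (hj : j ∉ S) (i : Fin n) :
    moveSign i (insert j S) = if j < i then -moveSign i S else moveSign i S := by
  unfold moveSign
  rw [Finset.filter_insert]
  split_ifs
  · rw [Finset.card_insert_of_notMem (by simp [hj]), msign_succ]
  · rfl

lemma moveSign_erase {j : Fin n} {S : Finset (Fin n)} (hj : j ∈ S) (i : Fin n) :
    moveSign i (S.erase j) = if j < i then -moveSign i S else moveSign i S := by
  have h := moveSign_insert (Finset.notMem_erase j S) i
  rw [Finset.insert_erase hj] at h
  rw [h]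
  split_ifs <;> simp

lemma pd_apply (i : Fin n) (f : Lambda n) (S : Finset (Fin n)) :
    pd n i f S = if i ∈ S then 0 else moveSign i S * f (insert i S) := rfl

lemma par_apply (f : Lambda n) (S : Finset (Fin n)) : par n f S = msign S.card * f S := rfl

lemma mono_apply (S T : Finset (Fin n)) : mono n S T = if T = S then 1 else 0 := rfl

lemma mulOp_apply (f g : Lambda n) (U : Finset (Fin n)) :
    mulOp n f g U = ∑ S ∈ U.powerset, msign (inversions n S (U \ S)) * f S * g (U \ S) := rfl

lemma eq_sum_smul_mono (f : Lambda n) : f = ∑ S, f S • mono n S := by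
  funext U
  simp [mono_apply, Finset.sum_apply]

theorem lambda_induction_mono {p : Lambda n → Prop} (f : Lambda n) (mono : ∀ S, p (mono n S))
    (add : ∀ f g, p f → p g → p (f + g)) (smul : ∀ (c : ℂ) f, p f → p (c • f)) : p f := by
  have h_zero : p 0 := by simpa only [zero_smul] using smul 0 _ (mono ∅)
  rw [eq_sum_smul_mono f]
  exact Finset.sum_induction _ p add h_zero fun S _ => smul _ _ (mono S)

/-! ### Multiplication of monomials -/

lemma inversions_union_left {S T : Finset (Fin n)} (h : Disjoint S T) (U : Finset (Fin n)) :
    inversions n (S ∪ T) U = inversions n S U + inversions n T U := by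
  unfold inversions
  rw [Finset.union_product, Finset.filter_union, Finset.card_union_of_disjoint]
  exact Finset.disjoint_filter_filter (Finset.disjoint_product.2 (.inl h))

lemma inversions_union_right {T U : Finset (Fin n)} (h : Disjoint T U) (S : Finset (Fin n)) :
    inversions n S (T ∪ U) = inversions n S T + inversions n S U := by
  unfold inversions
  rw [Finset.product_union, Finset.filter_union, Finset.card_union_of_disjoint]
  exact Finset.disjoint_filter_filter (Finset.disjoint_product.2 (.inr h))

lemma msign_inversions_singleton (i : Fin n) (S : Finset (Fin n)) :
    msign (inversions n {i} S) = moveSign i S := by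
  unfold inversions moveSign
  rw [Finset.singleton_product, Finset.filter_map, Finset.card_map]
  rfl

lemma mulOp_mono_mono (S T : Finset (Fin n)) :
    mulOp n (mono n S) (mono n T) =
      if Disjoint S T then msign (inversions n S T) • mono n (S ∪ T) else 0 := by
  funext U
  have h_iff : S ⊆ U ∧ U \ S = T ↔ Disjoint S T ∧ U = S ∪ T := by
    constructor
    · rintro ⟨hSU, rfl⟩
      exact ⟨Finset.disjoint_sdiff, (Finset.union_sdiff_of_subset hSU).symm⟩
    · rintro ⟨hST, rfl⟩
      exact ⟨Finset.subset_union_left, Finset.union_sdiff_cancel_left hST⟩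
  have h_coeff : mulOp n (mono n S) (mono n T) U =
      if S ⊆ U ∧ U \ S = T then msign (inversions n S T) else 0 := by
    have h_other : ∀ S' ∈ U.powerset, S' ≠ S →
        msign (inversions n S' (U \ S')) * mono n S S' * mono n T (U \ S') = 0 :=
      fun S' _ hS' => by simp [mono_apply, hS']
    by_cases hSU : S ⊆ U
    · rw [mulOp_apply, Finset.sum_eq_single_of_mem S (Finset.mem_powerset.2 hSU) h_other]
      by_cases hT : U \ S = T <;> simp [mono_apply, hSU, hT]
    · rw [if_neg (fun h => hSU h.1), mulOp_apply]
      refine Finset.sum_eq_zero fun S' hS' => h_other S' hS' ?_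
      rintro rfl
      exact hSU (Finset.mem_powerset.1 hS')
  rw [h_coeff, if_congr h_iff rfl rfl, ite_and]
  split_ifs <;> simp [mono_apply, *]

lemma mulOp_one (f : Lambda n) : mulOp n (mono n ∅) f = f := by
  induction f using lambda_induction_mono with
  | mono S => simp [mulOp_mono_mono, inversions, msign]
  | add f g hf hg => rw [map_add, hf, hg]
  | smul c f hf => rw [map_smul, hf]

theorem mulOp_mulOp (f g h : Lambda n) : mulOp n (mulOp n f g) h = mulOp n f (mulOp n g h) := by
  rw [eq_sum_smul_mono f, eq_sum_smul_mono g, eq_sum_smul_mono h]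
  simp only [map_sum, map_smul, LinearMap.sum_apply, LinearMap.smul_apply]
  refine Finset.sum_congr rfl fun U _ => congrArg _ <| Finset.sum_congr rfl fun T _ =>
    congrArg _ <| Finset.sum_congr rfl fun S _ => congrArg _ ?_
  by_cases hST : Disjoint S T <;> by_cases hTU : Disjoint T U <;>
    by_cases hSU : Disjoint S U <;>
    simp [mulOp_mono_mono, hST, hTU, hSU, inversions_union_left, inversions_union_right,
      msign_add, smul_smul, Finset.disjoint_union_left, Finset.disjoint_union_right,
      Finset.union_assoc, mul_comm, mul_left_comm]

lemma par_mono (S : Finset (Fin n)) : par n (mono n S) = msign S.card • mono n S := by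
  funext U
  by_cases hU : U = S <;> simp [par_apply, mono_apply, hU]

theorem par_mulOp (f g : Lambda n) : par n (mulOp n f g) = mulOp n (par n f) (par n g) := by
  rw [eq_sum_smul_mono f, eq_sum_smul_mono g]
  simp only [map_sum, map_smul, LinearMap.sum_apply, LinearMap.smul_apply]
  refine Finset.sum_congr rfl fun T _ => congrArg _ <| Finset.sum_congr rfl fun S _ =>
    congrArg _ ?_
  by_cases hST : Disjoint S T <;>
    simp [mulOp_mono_mono, par_mono, hST, Finset.card_union_of_disjoint, msign_add, smul_smul,
      mul_comm, mul_left_comm]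

/-! ### Canonical anticommutation relations -/

/-- Left multiplication by the generator `x_i`, as an operator on `Λ(n)` dual to `∂_i`. -/
def xMul (i : Fin n) : E n := mulOp n (mono n {i})

lemma mulOp_singleton (i : Fin n) : mulOp n (mono n {i}) = xMul i := rfl

lemma xMul_mono (i : Fin n) (S : Finset (Fin n)) :
    xMul i (mono n S) = if i ∈ S then 0 else moveSign i S • mono n (insert i S) := by
  rw [xMul, mulOp_mono_mono, msign_inversions_singleton, ← Finset.insert_eq]
  by_cases hi : i ∈ S <;> simp [hi]

lemma xMul_one (i : Fin n) : xMul i (mono n ∅) = mono n {i} := by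
  simp [xMul_mono, moveSign, msign]

lemma mono_insert {i : Fin n} {S : Finset (Fin n)} (hi : i ∉ S) :
    mono n (insert i S) = moveSign i S • xMul i (mono n S) := by
  rw [xMul_mono, if_neg hi, smul_smul, moveSign_mul_self, one_smul]

lemma pd_mono (i : Fin n) (S : Finset (Fin n)) :
    pd n i (mono n S) = if i ∈ S then moveSign i S • mono n (S.erase i) else 0 := by
  funext U
  by_cases hU : i ∈ U
  · have hne : U ≠ S.erase i := by rintro rfl; simp at hU
    split_ifs <;> simp [pd_apply, mono_apply, hU, hne]
  · have h_iff : insert i U = S ↔ i ∈ S ∧ U = S.erase i := by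
      constructor
      · rintro rfl; simp [hU]
      · rintro ⟨hS, rfl⟩; exact Finset.insert_erase hS
    by_cases hS : i ∈ S <;> by_cases hUS : U = S.erase i <;>
      simp [pd_apply, mono_apply, h_iff, hU, hS, hUS, moveSign_erase]

lemma mulOp_xMul (i : Fin n) (f g : Lambda n) :
    mulOp n (xMul i f) g = xMul i (mulOp n f g) :=
  mulOp_mulOp _ _ _

theorem lambda_induction {p : Lambda n → Prop} (f : Lambda n)
    (one : p (mono n ∅)) (xMul : ∀ i f, p f → p (xMul i f))
    (add : ∀ f g, p f → p g → p (f + g)) (smul : ∀ (c : ℂ) f, p f → p (c • f)) : p f := by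
  induction f using lambda_induction_mono with
  | mono S =>
    induction S using Finset.induction with
    | empty => exact one
    | insert i S hi ih => rw [mono_insert hi]; exact smul _ _ (xMul _ _ ih)
  | add f g hf hg => exact add _ _ hf hg
  | smul c f hf => exact smul _ _ hf

lemma par_par (f : Lambda n) : par n (par n f) = f := by
  funext S
  rw [par_apply, par_apply, ← mul_assoc, msign_mul_self, one_mul]

lemma par_one : par n (mono n ∅) = mono n ∅ := by simp [par_mono, msign]

lemma par_xMul (i : Fin n) (f : Lambda n) : par n (xMul i f) = -xMul i (par n f) := by
  rw [xMul, par_mulOp, par_mono, Finset.card_singleton, map_smul, LinearMap.smul_apply, msign,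
    pow_one, neg_one_smul]

lemma par_pd (i : Fin n) (f : Lambda n) : par n (pd n i f) = -pd n i (par n f) := by
  funext S
  by_cases hi : i ∈ S
  · simp [par_apply, pd_apply, hi]
  · simp [par_apply, pd_apply, hi, msign_succ, mul_left_comm]

lemma xMul_xMul (i j : Fin n) (f : Lambda n) : xMul i (xMul j f) = -xMul j (xMul i f) := by
  have h_swap : mulOp n (mono n {i}) (mono n {j}) = -mulOp n (mono n {j}) (mono n {i}) := by
    simp only [mulOp_singleton, xMul_mono, Finset.mem_singleton, moveSign, Finset.filter_singleton]
    obtain rfl | hij := eq_or_ne i j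
    · simp
    · obtain h | h := hij.lt_or_gt <;> simp [h, h.ne, h.ne', h.not_gt, msign, Finset.pair_comm]
  rw [xMul, xMul, ← mulOp_mulOp, h_swap, map_neg, LinearMap.neg_apply, mulOp_mulOp]

lemma pd_pd (i j : Fin n) (f : Lambda n) : pd n i (pd n j f) = -pd n j (pd n i f) := by
  funext S
  simp only [pd_apply, Pi.neg_apply, Finset.mem_insert]
  obtain rfl | hij := eq_or_ne i j
  · simp
  · by_cases hi : i ∈ S <;> by_cases hj : j ∈ S <;> obtain h | h := hij.lt_or_gt <;>
      simp [hi, hj, h, h.ne, h.ne', h.not_gt, moveSign_insert, Finset.insert_comm i j,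
        mul_left_comm]

lemma pd_xMul (i j : Fin n) (f : Lambda n) :
    pd n i (xMul j f) = (if i = j then f else 0) - xMul j (pd n i f) := by
  induction f using lambda_induction_mono with
  | add f g hf hg => simp only [map_add, hf, hg]; split_ifs <;> abel
  | smul c f hf => simp only [map_smul, hf]; split_ifs <;> simp [smul_sub]
  | mono S =>
    obtain rfl | hij := eq_or_ne i j
    · by_cases hi : i ∈ S <;>
        simp [hi, xMul_mono, pd_mono, smul_smul, moveSign_mul_self, moveSign_insert, moveSign_erase]
    · by_cases hi : i ∈ S <;> by_cases hj : j ∈ S <;> obtain h | h := hij.lt_or_gt <;>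
        simp [hi, hj, h, h.ne, h.ne', h.not_gt, xMul_mono, pd_mono, smul_smul, moveSign_insert,
          moveSign_erase, Finset.erase_insert_of_ne, mul_comm]

lemma pd_xMul_self (i : Fin n) (f : Lambda n) : pd n i (xMul i f) = f - xMul i (pd n i f) := by
  rw [pd_xMul, if_pos rfl]

lemma pd_one (i : Fin n) : pd n i (mono n ∅) = 0 := by simp [pd_mono]

theorem pd_mulOp (i : Fin n) (f g : Lambda n) :
    pd n i (mulOp n f g) = mulOp n (pd n i f) g + mulOp n (par n f) (pd n i g) := by
  induction f using lambda_induction with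
  | one => simp [mulOp_one, pd_one, par_one]
  | xMul j f ih =>
    simp only [mulOp_xMul, pd_xMul, ih, par_xMul, map_add, map_sub, map_neg, LinearMap.sub_apply,
      LinearMap.neg_apply]
    split_ifs
    · abel
    · rw [map_zero, LinearMap.zero_apply]; abel
  | add f g hf hg => simp only [map_add, LinearMap.add_apply, hf, hg]; abel
  | smul c f hf => simp only [map_smul, LinearMap.smul_apply, hf, smul_add]

lemma mulOp_apply_xMul (f : Lambda n) (i : Fin n) (g : Lambda n) :
    mulOp n f (xMul i g) = xMul i (mulOp n (par n f) g) := by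
  induction f using lambda_induction with
  | one => simp [mulOp_one, par_one]
  | xMul j f ih =>
    rw [mulOp_xMul, ih, xMul_xMul, par_xMul, map_neg, LinearMap.neg_apply, map_neg, mulOp_xMul]
  | add f g hf hg => simp only [map_add, LinearMap.add_apply, hf, hg]
  | smul c f hf => simp only [map_smul, LinearMap.smul_apply, hf]

lemma mulOp_apply_one (f : Lambda n) : mulOp n f (mono n ∅) = f := by
  induction f using lambda_induction with
  | one => rw [mulOp_one]
  | xMul j f ih => rw [mulOp_xMul, ih]
  | add f g hf hg => simp only [map_add, LinearMap.add_apply, hf, hg]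
  | smul c f hf => simp only [map_smul, LinearMap.smul_apply, hf]

/-- The two summands pick out the even and the odd part of `g`, as in the definition of the
super-commutator. -/
theorem mulOp_supercomm (f g h : Lambda n) :
    mulOp n f (mulOp n g h) = (2:ℂ)⁻¹ • (mulOp n (g + par n g) (mulOp n f h) +
      mulOp n (g - par n g) (mulOp n (par n f) h)) := by
  induction g using lambda_induction generalizing f with
  | one =>
    simp only [mulOp_one, par_one, sub_self, map_add, map_zero, LinearMap.add_apply,
      LinearMap.zero_apply]
    module
  | xMul i g ih =>
    rw [mulOp_xMul, mulOp_apply_xMul, ih, par_par]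
    simp only [mulOp_xMul, par_xMul, map_add, map_sub, map_neg, map_smul, LinearMap.add_apply,
      LinearMap.sub_apply, LinearMap.neg_apply]
    module
  | add g g' hg hg' =>
    simp only [map_add, map_sub, LinearMap.add_apply, LinearMap.sub_apply] at hg hg' ⊢
    rw [hg, hg']
    module
  | smul c g hg =>
    simp only [map_add, map_sub, map_smul, LinearMap.add_apply, LinearMap.sub_apply,
      LinearMap.smul_apply] at hg ⊢
    rw [hg]
    module

/-! ### Superderivations -/

/-- The superderivation `f ∂_i` of `Λ(n)`. -/
def vectorField (f : Lambda n) (i : Fin n) : E n := mulOp n f * pd n i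

lemma vectorField_apply (f : Lambda n) (i : Fin n) (h : Lambda n) :
    vectorField f i h = mulOp n f (pd n i h) := rfl

lemma vectorField_add (f g : Lambda n) (i : Fin n) :
    vectorField (f + g) i = vectorField f i + vectorField g i := by
  simp only [vectorField, map_add, add_mul]

lemma vectorField_sub (f g : Lambda n) (i : Fin n) :
    vectorField (f - g) i = vectorField f i - vectorField g i := by
  simp only [vectorField, map_sub, sub_mul]

lemma vectorField_smul (c : ℂ) (f : Lambda n) (i : Fin n) :
    vectorField (c • f) i = c • vectorField f i := by
  simp only [vectorField, map_smul, smul_mul_assoc]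

lemma vectorField_neg (f : Lambda n) (i : Fin n) : vectorField (-f) i = -vectorField f i := by
  rw [vectorField, map_neg]
  exact neg_mul (mulOp n f) (pd n i)

lemma vectorField_zero (i : Fin n) : vectorField 0 i = 0 := by
  rw [vectorField, map_zero, zero_mul]

lemma vectorField_sum {ι : Type*} (s : Finset ι) (f : ι → Lambda n) (i : Fin n) :
    vectorField (∑ k ∈ s, f k) i = ∑ k ∈ s, vectorField (f k) i := by
  simp only [vectorField, map_sum, Finset.sum_mul]

lemma par_mul_vectorField_mul_par (f : Lambda n) (i : Fin n) :
    par n * vectorField f i * par n = vectorField (-par n f) i := by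
  refine LinearMap.ext fun h => ?_
  simp only [Module.End.mul_apply, vectorField_apply, par_mulOp, par_pd, par_par, map_neg,
    LinearMap.neg_apply]

theorem sbL_vectorField (f g : Lambda n) (i j : Fin n) :
    sbL n (vectorField f i) (vectorField g j) =
      vectorField (mulOp n f (pd n i g)) j + vectorField (mulOp n (pd n j (par n f)) g) i := by
  refine LinearMap.ext fun h => ?_
  have h_quadratic := mulOp_supercomm f (par n g) (pd n i (pd n j h))
  have h_linear := mulOp_supercomm (pd n j (par n f)) g (pd n i h)
  rw [par_par] at h_quadratic
  rw [par_pd, par_par] at h_linear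
  change sbFun n _ _ h = _
  rw [sbFun, par_mul_vectorField_mul_par, par_mul_vectorField_mul_par, ← vectorField_add,
    ← vectorField_sub]
  simp only [LinearMap.sub_apply, LinearMap.smul_apply, LinearMap.add_apply, Module.End.mul_apply,
    vectorField_apply, mulOp_mulOp]
  rw [h_linear]
  simp only [pd_mulOp, map_add, map_sub, map_neg, par_par, h_quadratic, pd_pd j i,
    LinearMap.add_apply, LinearMap.sub_apply, LinearMap.neg_apply]
  module

/-! ### Degrees -/

lemma mono_mem_ldeg (S : Finset (Fin n)) : mono n S ∈ ldeg n S.card := by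
  rintro T hT
  rw [mono_apply, if_neg]
  rintro rfl
  exact hT rfl

lemma par_mem_ldeg {d : ℤ} {f : Lambda n} (hf : f ∈ ldeg n d) : par n f ∈ ldeg n d :=
  fun S hS => by rw [par_apply, hf S hS, mul_zero]

lemma pd_mem_edeg (i : Fin n) : pd n i ∈ edeg n (-1) := by
  intro m f hf S hS
  rw [pd_apply]
  split_ifs with hi
  · rfl
  · rw [hf _ (by rw [Finset.card_insert_of_notMem hi]; push_cast; omega), mul_zero]

lemma mulOp_mem_edeg {d : ℤ} {f : Lambda n} (hf : f ∈ ldeg n d) : mulOp n f ∈ edeg n d := by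
  intro m g hg U hU
  refine Finset.sum_eq_zero fun S hS => ?_
  have h_card := Finset.card_sdiff_add_card_eq_card (Finset.mem_powerset.1 hS)
  obtain hSd | hSd := ne_or_eq (S.card : ℤ) d
  · rw [hf S hSd, mul_zero, zero_mul]
  · rw [hg (U \ S) (by omega), mul_zero]

lemma vectorField_mem_edeg {d : ℤ} {f : Lambda n} (hf : f ∈ ldeg n d) (i : Fin n) :
    vectorField f i ∈ edeg n (d - 1) := by
  intro m g hg
  rw [show m + (d - 1) = m + -1 + d by ring]
  exact mulOp_mem_edeg hf _ _ (pd_mem_edeg i _ _ hg)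

lemma vectorField_mono_mem_edeg (S : Finset (Fin n)) (i : Fin n) :
    vectorField (mono n S) i ∈ edeg n (S.card - 1) :=
  vectorField_mem_edeg (mono_mem_ldeg S) i

lemma xMul_mono_mem_ldeg (i : Fin n) (S : Finset (Fin n)) :
    xMul i (mono n S) ∈ ldeg n (S.card + 1) := by
  have := mulOp_mem_edeg (mono_mem_ldeg {i}) _ _ (mono_mem_ldeg S)
  rwa [Finset.card_singleton] at this

/-! ### Raising the degree by brackets with elements of degree one -/

lemma pd_xMul_mono_singleton (k i j : Fin n) :
    pd n k (xMul i (mono n {j})) =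
      (if k = i then mono n {j} else 0) - if k = j then mono n {i} else 0 := by
  rw [← xMul_one j, pd_xMul, pd_xMul, pd_one]
  split_ifs <;> simp [xMul_one]

theorem sbL_vectorField_quadratic (i j l k : Fin n) (f : Lambda n) :
    sbL n (vectorField (xMul i (mono n {j})) l) (vectorField f k) =
      vectorField (xMul i (xMul j (pd n l f))) k +
        ((if k = i then vectorField (xMul j f) l else 0) -
          if k = j then vectorField (xMul i f) l else 0) := by
  have h_par : par n (xMul i (mono n {j})) = xMul i (mono n {j}) := by
    rw [← xMul_one j, par_xMul, par_xMul, par_one, map_neg, neg_neg]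
  rw [sbL_vectorField, h_par, pd_xMul_mono_singleton, mulOp_xMul, mulOp_singleton]
  split_ifs <;>
    simp only [map_sub, map_zero, mulOp_singleton, LinearMap.sub_apply, LinearMap.zero_apply,
      vectorField_sub, vectorField_zero]

lemma vectorField_quadratic_mem_edeg (i j l : Fin n) :
    vectorField (xMul i (mono n {j})) l ∈ edeg n 1 := by
  simpa using vectorField_mem_edeg (xMul_mono_mem_ldeg i {j}) l

lemma xMul_pd_mono {j : Fin n} {S : Finset (Fin n)} (hj : j ∈ S) :
    xMul j (pd n j (mono n S)) = mono n S := by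
  refine (sub_eq_zero.1 ?_).symm
  rw [← pd_xMul_self, xMul_mono, if_pos hj, map_zero]

lemma sbL_vectorField_mono_of_mem {i j k : Fin n} {S : Finset (Fin n)} (hj : j ∈ S)
    (hki : k ≠ i) (hkj : k ≠ j) :
    sbL n (vectorField (xMul i (mono n {j})) j) (vectorField (mono n S) k) =
      vectorField (xMul i (mono n S)) k := by
  rw [sbL_vectorField_quadratic, if_neg hki, if_neg hkj, xMul_pd_mono hj, sub_zero, add_zero]

lemma sbL_vectorField_mono_of_notMem {i k : Fin n} {S : Finset (Fin n)} (hk : k ∉ S)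
    (hki : k ≠ i) :
    sbL n (vectorField (xMul i (mono n {k})) k) (vectorField (mono n S) k) =
      -vectorField (xMul i (mono n S)) k := by
  rw [sbL_vectorField_quadratic, if_neg hki, if_pos rfl, pd_mono, if_neg hk, map_zero, map_zero,
    vectorField_zero, zero_add, zero_sub]

lemma vectorField_mono_mem {M : Submodule ℂ (E n)} {i : Fin n} {S : Finset (Fin n)} (hi : i ∈ S)
    {k : Fin n} (h : vectorField (xMul i (mono n (S.erase i))) k ∈ M) :
    vectorField (mono n S) k ∈ M := by
  rw [← Finset.insert_erase hi, mono_insert (Finset.notMem_erase i S), vectorField_smul]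
  exact M.smul_mem _ h

/-! ### The Witt superalgebra -/

lemma Wmap_eq_sum (F : Fin n → Lambda n) : Wmap n F = ∑ i, vectorField (F i) i := rfl

lemma Wmap_single (i : Fin n) (f : Lambda n) : Wmap n (Pi.single i f) = vectorField f i := by
  rw [Wmap_eq_sum, Finset.sum_eq_single_of_mem i (Finset.mem_univ i) fun j _ hj => ?_,
    Pi.single_eq_same]
  rw [Pi.single_eq_of_ne hj, vectorField_zero]

lemma vectorField_mem_Wn (f : Lambda n) (i : Fin n) : vectorField f i ∈ Wn n :=
  ⟨Pi.single i f, Wmap_single i f⟩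

lemma exists_mem_mem_ne {S : Finset (Fin n)} (hS : 3 ≤ S.card) (k : Fin n) :
    ∃ i ∈ S, ∃ j ∈ S, k ≠ i ∧ k ≠ j ∧ i ≠ j := by
  have h_card : 1 < (S.erase k).card := by
    have := Finset.pred_card_le_card_erase (s := S) (a := k)
    omega
  obtain ⟨i, hi, j, hj, hij⟩ := Finset.one_lt_card.1 h_card
  rw [Finset.mem_erase] at hi hj
  exact ⟨i, hi.2, j, hj.2, hi.1.symm, hj.1.symm, hij⟩

theorem Wn_le {M : Submodule ℂ (E n)} (hM : ∀ x ∈ M, ∀ y ∈ M, sbL n x y ∈ M)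
    (h_local : ∀ d : ℤ, |d| ≤ 1 → Wn n ⊓ edeg n d ≤ M) : Wn n ≤ M := by
  have h_mono (S : Finset (Fin n)) (k : Fin n) : vectorField (mono n S) k ∈ M := by
    induction S using Finset.strongInduction with
    | H S ih =>
    obtain hS | hS := Nat.lt_or_ge S.card 3
    · exact h_local (S.card - 1) (abs_le.2 (by omega))
        ⟨vectorField_mem_Wn _ _, vectorField_mono_mem_edeg S k⟩
    · obtain ⟨i, hi, j, hj, hki, hkj, hij⟩ := exists_mem_mem_ne hS k
      refine vectorField_mono_mem hi ?_
      rw [← sbL_vectorField_mono_of_mem (Finset.mem_erase.2 ⟨hij.symm, hj⟩) hki hkj]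
      exact hM _
        (h_local 1 (by simp) ⟨vectorField_mem_Wn _ _, vectorField_quadratic_mem_edeg i j j⟩)
        _ (ih _ (Finset.erase_ssubset hi))
  rintro _ ⟨F, rfl⟩
  refine M.sum_mem (t := Finset.univ) (f := fun i => vectorField (F i) i) fun i _ => ?_
  induction F i using lambda_induction_mono with
  | mono S => exact h_mono S i
  | add f g hf hg => exact vectorField_add f g i ▸ M.add_mem hf hg
  | smul c f hf => exact vectorField_smul c f i ▸ M.smul_mem c hf

/-! ### The special series -/

lemma divMap_single (i : Fin n) (f : Lambda n) : divMap n (Pi.single i f) = pd n i f := by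
  change ∑ j, pd n j (Pi.single (M := fun _ => Lambda n) i f j) = _
  rw [Finset.sum_eq_single_of_mem i (Finset.mem_univ i) fun j _ hj => ?_, Pi.single_eq_same]
  rw [Pi.single_eq_of_ne hj, map_zero]

lemma single_mono_mem_divFree {k : Fin n} {S : Finset (Fin n)} (hk : k ∉ S) :
    Pi.single k (mono n S) ∈ divFree n := by
  rw [divFree, LinearMap.mem_ker, divMap_single, pd_mono, if_neg hk]

lemma single_quadratic_sub_mem_divFree {i j k : Fin n} (hij : i ≠ j) (hik : i ≠ k) :
    Pi.single j (xMul i (mono n {j})) - Pi.single k (xMul i (mono n {k})) ∈ divFree n := by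
  rw [divFree, LinearMap.mem_ker, map_sub, divMap_single, divMap_single, pd_xMul_mono_singleton,
    pd_xMul_mono_singleton, if_neg hij.symm, if_neg hik.symm, if_pos rfl, if_pos rfl, sub_self]

lemma single_pd_mem {N : Submodule ℂ (Fin n → Lambda n)} {k : Fin n}
    (hN : ∀ S, k ∉ S → Pi.single k (mono n S) ∈ N) (g : Lambda n) :
    Pi.single k (pd n k g) ∈ N := by
  induction g using lambda_induction_mono with
  | mono S =>
    rw [pd_mono]
    split_ifs
    · rw [Pi.single_smul]
      exact N.smul_mem _ (hN _ (Finset.notMem_erase k S))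
    · rw [Pi.single_zero]
      exact N.zero_mem
  | add f g hf hg => rw [map_add, Pi.single_add]; exact N.add_mem hf hg
  | smul c f hf => rw [map_smul, Pi.single_smul]; exact N.smul_mem c hf

lemma sum_single_xMul_mem {N : Submodule ℂ (Fin n → Lambda n)}
    (hN : ∀ i j T, i ∉ T → j ∉ T →
      Pi.single i (xMul i (mono n T)) - Pi.single j (xMul j (mono n T)) ∈ N)
    {G : Fin n → Lambda n} (hG : ∑ k, G k = 0) (hG_mem : ∀ k, ∀ T, k ∈ T → G k T = 0) :
    ∑ k, Pi.single k (xMul k (G k)) ∈ N := by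
  let e (k : Fin n) : Lambda n →ₗ[ℂ] Fin n → Lambda n := LinearMap.single ℂ _ k ∘ₗ xMul k
  have h_coeff (T : Finset (Fin n)) : ∑ k, G k T • e k (mono n T) ∈ N := by
    by_cases hT : ∃ j, j ∉ T
    · obtain ⟨j, hj⟩ := hT
      have h_sum : ∑ k, G k T = 0 := by simpa using congrFun hG T
      have h_diff : ∑ k, G k T • e k (mono n T) =
          ∑ k, G k T • (e k (mono n T) - e j (mono n T)) := by
        simp only [smul_sub, Finset.sum_sub_distrib, ← Finset.sum_smul, h_sum, zero_smul, sub_zero]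
      rw [h_diff]
      refine N.sum_mem fun k _ => ?_
      by_cases hk : k ∈ T
      · rw [hG_mem k T hk, zero_smul]
        exact N.zero_mem
      · exact N.smul_mem _ (hN k j T hk hj)
    · push Not at hT
      simp only [fun k => hG_mem k T (hT k), zero_smul, Finset.sum_const_zero, N.zero_mem]
  have h_expand : ∑ k, Pi.single k (xMul k (G k)) = ∑ T, ∑ k, G k T • e k (mono n T) := by
    rw [Finset.sum_comm]
    refine Finset.sum_congr rfl fun k _ => ?_
    simp only [← map_smul, ← map_sum, ← eq_sum_smul_mono]
    rfl
  rw [h_expand]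
  exact N.sum_mem fun T _ => h_coeff T

theorem divFree_le {N : Submodule ℂ (Fin n → Lambda n)}
    (h_off : ∀ k S, k ∉ S → Pi.single k (mono n S) ∈ N)
    (h_diag : ∀ i j T, i ∉ T → j ∉ T →
      Pi.single i (xMul i (mono n T)) - Pi.single j (xMul j (mono n T)) ∈ N) :
    divFree n ≤ N := by
  intro F hF
  have h_split : F = ∑ k, Pi.single k (pd n k (xMul k (F k))) +
      ∑ k, Pi.single k (xMul k (pd n k (F k))) := by
    rw [← Finset.sum_add_distrib]
    simp only [← Pi.single_add, pd_xMul_self, sub_add_cancel, Finset.univ_sum_single]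
  rw [h_split]
  exact N.add_mem (N.sum_mem fun k _ => single_pd_mem (h_off k) _)
    (sum_single_xMul_mem h_diag hF fun k T hk => by rw [pd_apply, if_pos hk])

lemma sbL_vectorField_xMul {i : Fin n} {f : Lambda n} (hf : pd n i f = 0) (j : Fin n) :
    sbL n (vectorField (xMul i f) j) (vectorField (mono n {j}) i) =
      vectorField (xMul i f) i - vectorField (xMul j f) j := by
  have h_pd_j : pd n j (mono n {j}) = mono n ∅ := by
    rw [← xMul_one, pd_xMul_self, pd_one, map_zero, sub_zero]
  have h_pd_i : pd n i (par n (xMul i f)) = -par n f := by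
    rw [← neg_inj, ← par_pd, pd_xMul_self, hf, map_zero, sub_zero, neg_neg]
  have h_mul : mulOp n (par n f) (mono n {j}) = xMul j f := by
    rw [← xMul_one, mulOp_apply_xMul, par_par, mulOp_apply_one]
  rw [sbL_vectorField, h_pd_j, h_pd_i, mulOp_apply_one, map_neg, LinearMap.neg_apply, h_mul,
    vectorField_neg, ← sub_eq_add_neg]

lemma vectorField_xMul_sub_mem {M : Submodule ℂ (E n)} (hM : ∀ x ∈ M, ∀ y ∈ M, sbL n x y ∈ M)
    (h_off : ∀ (k : Fin n) (S : Finset (Fin n)), S.Nonempty → k ∉ S → vectorField (mono n S) k ∈ M)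
    (i j : Fin n) {T : Finset (Fin n)} (hi : i ∉ T) (hj : j ∉ T) :
    vectorField (xMul i (mono n T)) i - vectorField (xMul j (mono n T)) j ∈ M := by
  obtain rfl | hij := eq_or_ne i j
  · rw [sub_self]
    exact M.zero_mem
  rw [← sbL_vectorField_xMul (by rw [pd_mono, if_neg hi]) j]
  refine hM _ ?_ _ (h_off i {j} (Finset.singleton_nonempty j) (by simpa using hij))
  rw [xMul_mono, if_neg hi, vectorField_smul]
  exact M.smul_mem _ (h_off j _ (Finset.insert_nonempty i T) (by simp [hj, hij.symm]))

lemma vectorField_mono_mem_of_notMem {M : Submodule ℂ (E n)}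
    (hM : ∀ x ∈ M, ∀ y ∈ M, sbL n x y ∈ M)
    (h_small : ∀ (k : Fin n) (S : Finset (Fin n)), S.Nonempty → S.card < 3 → k ∉ S →
      vectorField (mono n S) k ∈ M)
    (h_quadratic : ∀ i j k : Fin n, i ≠ j → i ≠ k →
      vectorField (xMul i (mono n {j})) j - vectorField (xMul i (mono n {k})) k ∈ M)
    {k : Fin n} {S : Finset (Fin n)} (hS : S.Nonempty) (hk : k ∉ S) :
    vectorField (mono n S) k ∈ M := by
  induction S using Finset.strongInduction with
  | H S ih =>
  obtain h_card | h_card := Nat.lt_or_ge S.card 3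
  · exact h_small k S hS h_card hk
  obtain ⟨i, hi, j, hj, hki, hkj, hij⟩ := exists_mem_mem_ne h_card k
  have hj_mem : j ∈ S.erase i := Finset.mem_erase.2 ⟨hij.symm, hj⟩
  have hk_erase : k ∉ S.erase i := fun h => hk (Finset.mem_of_mem_erase h)
  have h_bracket : sbL n
      (vectorField (xMul i (mono n {j})) j - vectorField (xMul i (mono n {k})) k)
      (vectorField (mono n (S.erase i)) k) =
        (2 : ℂ) • vectorField (xMul i (mono n (S.erase i))) k := by
    rw [map_sub, LinearMap.sub_apply, sbL_vectorField_mono_of_mem hj_mem hki hkj,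
      sbL_vectorField_mono_of_notMem hk_erase hki, sub_neg_eq_add, two_smul]
  refine vectorField_mono_mem hi ((M.smul_mem_iff (two_ne_zero (α := ℂ))).1 ?_)
  rw [← h_bracket]
  exact hM _ (h_quadratic i j k hij hki.symm) _
    (ih _ (Finset.erase_ssubset hi) ⟨j, hj_mem⟩ hk_erase)

/-- Covers `S(n)` and `S̃(n)`, where `Φ` is `(fᵢ) ↦ ∑ fᵢ∂ᵢ`, respectively its product with
`1 − x₁⋯x_n`: the latter factor only matters in degree `−1`. -/
theorem map_divFree_le {M : Submodule ℂ (E n)} (hM : ∀ x ∈ M, ∀ y ∈ M, sbL n x y ∈ M)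
    {Φ : (Fin n → Lambda n) →ₗ[ℂ] E n}
    (hΦ : ∀ k S, S.Nonempty → Φ (Pi.single k (mono n S)) = vectorField (mono n S) k)
    (h_neg : ∀ k, Φ (Pi.single k (mono n ∅)) ∈ M)
    (h_zero : (divFree n).map Φ ⊓ edeg n 0 ≤ M) (h_one : (divFree n).map Φ ⊓ edeg n 1 ≤ M) :
    (divFree n).map Φ ≤ M := by
  have hΦ_xMul (i k : Fin n) (T : Finset (Fin n)) :
      Φ (Pi.single k (xMul i (mono n T))) = vectorField (xMul i (mono n T)) k := by
    rw [xMul_mono]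
    split_ifs
    · rw [Pi.single_zero, map_zero, vectorField_zero]
    · rw [Pi.single_smul, map_smul, vectorField_smul, hΦ _ _ (Finset.insert_nonempty i T)]
  have h_small (k : Fin n) (S : Finset (Fin n)) (hS : S.Nonempty) (h_card : S.card < 3)
      (hk : k ∉ S) : vectorField (mono n S) k ∈ M := by
    have h_map : vectorField (mono n S) k ∈ (divFree n).map Φ :=
      ⟨_, single_mono_mem_divFree hk, hΦ k S hS⟩
    have h_deg := vectorField_mono_mem_edeg S k
    obtain h | h : S.card = 1 ∨ S.card = 2 := by have := hS.card_pos; omega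
    · exact h_zero ⟨h_map, by simpa [h] using h_deg⟩
    · exact h_one ⟨h_map, by simpa [h] using h_deg⟩
  have h_quadratic (i j k : Fin n) (hij : i ≠ j) (hik : i ≠ k) :
      vectorField (xMul i (mono n {j})) j - vectorField (xMul i (mono n {k})) k ∈ M := by
    refine h_one ⟨⟨_, single_quadratic_sub_mem_divFree hij hik, ?_⟩, ?_⟩
    · rw [map_sub, hΦ_xMul, hΦ_xMul]
    · exact sub_mem (vectorField_quadratic_mem_edeg i j j) (vectorField_quadratic_mem_edeg i k k)
  have h_off (k : Fin n) (S : Finset (Fin n)) (hS : S.Nonempty) (hk : k ∉ S) :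
      vectorField (mono n S) k ∈ M :=
    vectorField_mono_mem_of_notMem hM h_small h_quadratic hS hk
  refine Submodule.map_le_iff_le_comap.2 (divFree_le (fun k S hk => ?_) fun i j T hi hj => ?_)
  · obtain rfl | hS := S.eq_empty_or_nonempty
    · exact h_neg k
    · rw [Submodule.mem_comap, hΦ k S hS]
      exact h_off k S hS hk
  · rw [Submodule.mem_comap, map_sub, hΦ_xMul, hΦ_xMul]
    exact vectorField_xMul_sub_mem hM h_off i j hi hj

theorem Sn_le {M : Submodule ℂ (E n)} (hM : ∀ x ∈ M, ∀ y ∈ M, sbL n x y ∈ M)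
    (h_local : ∀ d : ℤ, |d| ≤ 1 → Sn n ⊓ edeg n d ≤ M) : Sn n ≤ M := by
  refine map_divFree_le hM (fun k S _ => Wmap_single k _) (fun k => ?_) (h_local 0 (by simp))
    (h_local 1 (by simp))
  rw [Wmap_single]
  refine h_local (-1) (by simp)
    ⟨⟨_, single_mono_mem_divFree (Finset.notMem_empty k), Wmap_single k _⟩, ?_⟩
  simpa using vectorField_mono_mem_edeg ∅ k

lemma mulOp_oneM_mono {S : Finset (Fin n)} (hS : S.Nonempty) :
    mulOp n (oneM n) (mono n S) = mono n S := by
  have h_univ : ¬Disjoint Finset.univ S := fun h =>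
    let ⟨i, hi⟩ := hS
    Finset.disjoint_left.1 h (Finset.mem_univ i) hi
  rw [oneM, omegaTop, map_sub, LinearMap.sub_apply, mulOp_one, mulOp_mono_mono, if_neg h_univ,
    sub_zero]

lemma Wmap_oneMScale_single (k : Fin n) (f : Lambda n) :
    (Wmap n ∘ₗ oneMScale n) (Pi.single k f) = vectorField (mulOp n (oneM n) f) k := by
  have h_scale : oneMScale n (Pi.single k f) = Pi.single k (mulOp n (oneM n) f) :=
    funext fun i => Pi.apply_single (fun _ => mulOp n (oneM n)) (fun _ => map_zero _) k f i
  rw [LinearMap.comp_apply, h_scale, Wmap_single]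

theorem Stn_le {M : Submodule ℂ (E n)} (hM : ∀ x ∈ M, ∀ y ∈ M, sbL n x y ∈ M)
    (h_neg : ∀ k, vectorField (oneM n) k ∈ M) (h_zero : Stn n ⊓ edeg n 0 ≤ M)
    (h_one : Stn n ⊓ edeg n 1 ≤ M) : Stn n ≤ M := by
  refine map_divFree_le hM (fun k S hS => ?_) (fun k => ?_) h_zero h_one
  · rw [Wmap_oneMScale_single, mulOp_oneM_mono hS]
  · rw [Wmap_oneMScale_single, mulOp_apply_one]
    exact h_neg k

/-! ### The Hamiltonian superalgebra -/

lemma cidx_cidx (i : Fin n) : cidx n (cidx n i) = i := by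
  have := i.isLt
  apply Fin.ext
  simp only [cidx]
  split_ifs <;> omega

lemma val_add_one_of_cidx_eq {i : Fin n} (h : cidx n i = i) : i.val + 1 = n := by
  have := i.isLt
  have h_val := congrArg Fin.val h
  simp only [cidx] at h_val
  split_ifs at h_val <;> omega

/-- The conjugation `i ↦ i'` of indices, as a permutation. -/
def conjPerm : Equiv.Perm (Fin n) := ⟨cidx n, cidx n, cidx_cidx, cidx_cidx⟩

lemma DHmap_eq_sum (f : Lambda n) :
    DHmap n f = ∑ i, vectorField (pd n i (par n f)) (cidx n i) := rfl

lemma DHmap_apply (f g : Lambda n) :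
    DHmap n f g = ∑ i, mulOp n (pd n i (par n f)) (pd n (cidx n i) g) := by
  rw [DHmap_eq_sum, LinearMap.sum_apply]
  rfl

lemma pd_par_DHmap (f g : Lambda n) (j : Fin n) :
    pd n j (par n (DHmap n f g)) =
      ∑ k, (mulOp n (pd n k (par n f)) (pd n (cidx n k) (pd n j (par n g))) +
        mulOp n (pd n j (pd n k f)) (pd n (cidx n k) (par n g))) := by
  rw [DHmap_apply, map_sum, map_sum]
  refine Finset.sum_congr rfl fun k _ => ?_
  rw [par_mulOp, pd_mulOp, par_par]
  simp only [par_pd, par_par, map_neg, LinearMap.neg_apply, neg_neg]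
  rw [pd_pd j (cidx n k), map_neg, neg_neg, add_comm]

theorem sbL_DHmap (f g : Lambda n) :
    sbL n (DHmap n f) (DHmap n g) = DHmap n (DHmap n f g) := by
  have h_bracket (i k : Fin n) :
      sbL n (vectorField (pd n i (par n f)) (cidx n i))
          (vectorField (pd n k (par n g)) (cidx n k)) =
        vectorField (mulOp n (pd n i (par n f)) (pd n (cidx n i) (pd n k (par n g)))) (cidx n k) +
          vectorField (mulOp n (pd n i (pd n (cidx n k) f)) (pd n k (par n g))) (cidx n i) := by
    rw [sbL_vectorField, par_pd, par_par, map_neg, pd_pd (cidx n k) i, neg_neg]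
  have h_reindex (i : Fin n) :
      ∑ k, vectorField (mulOp n (pd n i (pd n (cidx n k) f)) (pd n k (par n g))) (cidx n i) =
        ∑ k, vectorField (mulOp n (pd n i (pd n k f)) (pd n (cidx n k) (par n g))) (cidx n i) := by
    rw [← Equiv.sum_comp conjPerm]
    refine Finset.sum_congr rfl fun k _ => ?_
    change vectorField (mulOp n (pd n i (pd n (cidx n (cidx n k)) f)) _) _ = _
    rw [cidx_cidx]
    rfl
  have h_expand : DHmap n (DHmap n f g) =
      ∑ j, ∑ k, vectorField (mulOp n (pd n k (par n f)) (pd n (cidx n k) (pd n j (par n g))))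
          (cidx n j) +
        ∑ j, ∑ k, vectorField (mulOp n (pd n j (pd n k f)) (pd n (cidx n k) (par n g)))
          (cidx n j) := by
    simp only [DHmap_eq_sum (DHmap n f g), pd_par_DHmap, vectorField_sum, vectorField_add,
      Finset.sum_add_distrib]
  rw [h_expand, DHmap_eq_sum f, DHmap_eq_sum g, LinearMap.map_sum₂]
  simp only [map_sum, h_bracket, Finset.sum_add_distrib, h_reindex]
  rw [Finset.sum_comm]

/-- By `h_conj`, only the term contracting `x_a` with `x_{a'}` survives. -/
lemma DHmap_mono_insert_mono_insert {P Q : Finset (Fin n)} {a : Fin n} (hPQ : Disjoint P Q)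
    (haP : a ∉ P) (haQ : a ∉ Q) (haQ' : cidx n a ∉ Q)
    (h_conj : cidx n a ∈ P ∨ ∀ k ∈ P, cidx n k ∉ Q) :
    ∃ c : ℂ, c ≠ 0 ∧ DHmap n (mono n (insert a P)) (mono n (insert (cidx n a) Q)) =
      c • mono n (P ∪ Q) := by
  have h_other (k : Fin n) (hk : k ≠ a) :
      mulOp n (pd n k (par n (mono n (insert a P))))
        (pd n (cidx n k) (mono n (insert (cidx n a) Q))) = 0 := by
    have hk' : cidx n k ≠ cidx n a := conjPerm.injective.ne hk
    rw [par_mono, map_smul, pd_mono, pd_mono]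
    split_ifs with hkP hkQ
    · replace hkP : k ∈ P := Finset.mem_of_mem_insert_of_ne hkP hk
      replace hkQ : cidx n k ∈ Q := Finset.mem_of_mem_insert_of_ne hkQ hk'
      have haP' : cidx n a ∈ P := h_conj.resolve_right fun h => h k hkP hkQ
      have hka : cidx n a ≠ k := by rintro rfl; exact haQ (by rwa [cidx_cidx] at hkQ)
      have h_meet : ¬Disjoint ((insert a P).erase k) ((insert (cidx n a) Q).erase (cidx n k)) :=
        Finset.not_disjoint_iff.2 ⟨cidx n a, by simp [haP', hka], by simp [hk'.symm]⟩
      simp [mulOp_mono_mono, h_meet]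
    all_goals simp
  rw [DHmap_apply, Finset.sum_eq_single_of_mem a (Finset.mem_univ a) fun k _ => h_other k,
    par_mono, map_smul, pd_mono, if_pos (Finset.mem_insert_self _ _), pd_mono,
    if_pos (Finset.mem_insert_self _ _), Finset.erase_insert haP, Finset.erase_insert haQ']
  simp only [map_smul, LinearMap.smul_apply, mulOp_mono_mono, if_pos hPQ, smul_smul]
  exact ⟨_, by simp [msign_ne_zero, moveSign_ne_zero], rfl⟩

lemma exists_cidx_ne {S : Finset (Fin n)} (hS : 2 ≤ S.card) : ∃ b ∈ S, cidx n b ≠ b := by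
  obtain ⟨b, hb, c, hc, hbc⟩ := Finset.one_lt_card.1 hS
  by_cases h_fixed : cidx n b = b
  · refine ⟨c, hc, fun h => hbc (Fin.ext ?_)⟩
    have := val_add_one_of_cidx_eq h_fixed
    have := val_add_one_of_cidx_eq h
    omega
  · exact ⟨b, hb, h_fixed⟩

lemma exists_card_eq_two_of_ne_univ {S : Finset (Fin n)} (hS : 2 ≤ S.card)
    (h_univ : S ≠ Finset.univ) :
    ∃ a ∉ S, ∃ P ⊆ S, P.card = 2 ∧ cidx n a ∉ S \ P ∧
      (cidx n a ∈ P ∨ ∀ k ∈ P, cidx n k ∉ S \ P) := by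
  by_cases h_closed : ∀ a ∉ S, cidx n a ∉ S
  · obtain ⟨a, ha⟩ : ∃ a, a ∉ S := by
      by_contra! h
      exact h_univ (Finset.eq_univ_iff_forall.2 h)
    obtain ⟨b, hb, hbb⟩ := exists_cidx_ne hS
    have hb' : cidx n b ∈ S := by
      by_contra h
      exact h_closed _ h (by rwa [cidx_cidx])
    refine ⟨a, ha, {b, cidx n b}, Finset.insert_subset hb (Finset.singleton_subset_iff.2 hb'),
      Finset.card_pair hbb.symm, fun h => h_closed a ha (Finset.mem_sdiff.1 h).1, .inr ?_⟩
    simp [cidx_cidx]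
  · push Not at h_closed
    obtain ⟨a, ha, ha'⟩ := h_closed
    obtain ⟨P, haP, hPS, hP⟩ := Finset.exists_subsuperset_card_eq
      (Finset.singleton_subset_iff.2 ha') (by simp) hS
    rw [Finset.singleton_subset_iff] at haP
    exact ⟨a, ha, P, hPS, hP, fun h => (Finset.mem_sdiff.1 h).2 haP, .inl haP⟩

lemma DHmap_mono_mem_edeg (S : Finset (Fin n)) : DHmap n (mono n S) ∈ edeg n (S.card - 2) := by
  rw [DHmap_eq_sum]
  refine Submodule.sum_mem _ fun i _ => ?_
  have := vectorField_mem_edeg (pd_mem_edeg i _ _ (par_mem_ldeg (mono_mem_ldeg S))) (cidx n i)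
  rwa [show (S.card : ℤ) + -1 - 1 = S.card - 2 by ring] at this

lemma DHmap_mono_mem_Hn {S : Finset (Fin n)} (hS : S ≠ Finset.univ) :
    DHmap n (mono n S) ∈ Hn n := by
  refine ⟨_, ?_, rfl⟩
  change mono n S Finset.univ = 0
  rw [mono_apply, if_neg hS.symm]

lemma DHmap_one : DHmap n (mono n ∅) = 0 := by
  simp only [DHmap_eq_sum, par_one, pd_one, vectorField_zero, Finset.sum_const_zero]

lemma DHmap_mono_mem {M : Submodule ℂ (E n)} (hM : ∀ x ∈ M, ∀ y ∈ M, sbL n x y ∈ M)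
    (h_local : ∀ d : ℤ, |d| ≤ 1 → Hn n ⊓ edeg n d ≤ M) {S : Finset (Fin n)}
    (h_univ : S ≠ Finset.univ) : DHmap n (mono n S) ∈ M := by
  induction h_card : S.card using Nat.strong_induction_on generalizing S with
  | _ m ih =>
  obtain hS | hS := Nat.lt_or_ge S.card 4
  · obtain rfl | h_nonempty := S.eq_empty_or_nonempty
    · rw [DHmap_one]
      exact M.zero_mem
    · have := h_nonempty.card_pos
      exact h_local _ (abs_le.2 (by omega)) ⟨DHmap_mono_mem_Hn h_univ, DHmap_mono_mem_edeg S⟩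
  obtain ⟨a, ha, P, hPS, hP, ha', h_conj⟩ := exists_card_eq_two_of_ne_univ (by omega) h_univ
  have haP : a ∉ P := fun h => ha (hPS h)
  have haQ : a ∉ S \ P := fun h => ha (Finset.mem_sdiff.1 h).1
  obtain ⟨c, hc, h_bracket⟩ :=
    DHmap_mono_insert_mono_insert Finset.disjoint_sdiff haP haQ ha' h_conj
  have h_smaller (T : Finset (Fin n)) (hT : T.card < S.card) : DHmap n (mono n T) ∈ M := by
    refine ih _ (h_card ▸ hT) ?_ rfl
    rintro rfl
    exact hT.not_ge (Finset.card_le_univ S)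
  rw [Finset.union_sdiff_of_subset hPS] at h_bracket
  refine (M.smul_mem_iff hc).1 ?_
  rw [← map_smul, ← h_bracket, ← sbL_DHmap]
  refine hM _ (h_smaller _ ?_) _ (h_smaller _ ?_)
  · rw [Finset.card_insert_of_notMem haP]
    omega
  · rw [Finset.card_insert_of_notMem ha', Finset.card_sdiff_of_subset hPS]
    omega

theorem Hn_le {M : Submodule ℂ (E n)} (hM : ∀ x ∈ M, ∀ y ∈ M, sbL n x y ∈ M)
    (h_local : ∀ d : ℤ, |d| ≤ 1 → Hn n ⊓ edeg n d ≤ M) : Hn n ≤ M := by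
  rintro _ ⟨f, hf, rfl⟩
  rw [eq_sum_smul_mono f, map_sum]
  refine M.sum_mem fun S _ => ?_
  rw [map_smul]
  obtain rfl | hS := eq_or_ne S Finset.univ
  · rw [show f Finset.univ = 0 from hf, zero_smul]
    exact M.zero_mem
  · exact M.smul_mem _ (DHmap_mono_mem hM h_local hS)

theorem generated_by_local_part_general (n : ℕ) (t : CT) (M : Submodule ℂ (E n))
    (hcont : t.grade n (-1) ⊔ t.grade n 0 ⊔ t.grade n 1 ≤ M)
    (hclosed : ∀ x ∈ M, ∀ y ∈ M, sbL n x y ∈ M) :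
    t.algebra n ≤ M := by
  obtain ⟨⟨h_neg, h_zero⟩, h_one⟩ : (_ ∧ _) ∧ _ := by simpa only [sup_le_iff] using hcont
  have h_local (d : ℤ) (hd : |d| ≤ 1) : t.grade n d ≤ M := by
    obtain rfl | rfl | rfl : d = -1 ∨ d = 0 ∨ d = 1 := by rw [abs_le] at hd; omega
    exacts [h_neg, h_zero, h_one]
  cases t with
  | W => exact Wn_le hclosed h_local
  | S => exact Sn_le hclosed h_local
  | St => exact Stn_le hclosed (fun k => h_neg (Submodule.subset_span ⟨k, rfl⟩)) h_zero h_one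
  | H => exact Hn_le hclosed h_local

/-- A Cartan type Lie superalgebra `L` over `ℂ` is generated as a Lie
superalgebra by `L_{−1} ⊕ L_0 ⊕ L_1`: the smallest subalgebra of `L` containing
`L_{−1} ⊕ L_0 ⊕ L_1` equals `L`. -/
theorem generated_by_local_part (n : ℕ) (t : CT) (ht : t.valid n)
    (M : Submodule ℂ (E n)) (hML : M ≤ t.algebra n)
    (hcont : t.grade n (-1) ⊔ t.grade n 0 ⊔ t.grade n 1 ≤ M)
    (hclosed : ∀ x ∈ M, ∀ y ∈ M, sbL n x y ∈ M) :
    M = t.algebra n :=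
  le_antisymm hML (generated_by_local_part_general n t M hcont hclosed)

end CartanSuper
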